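/- arXiv:2110.06150 — 7 statements merged into one kernel-verified Lean document; each statement's English description precedes it below -/
import Mathlib

section
/- Let d, d_u, s_c, s_e be natural numbers with s_c + s_e ≤ d. Let A ∈ ℝ^{d×d} and B ∈ ℝ^{d×d_u}, and suppose there is an invertible T₁ ∈ ℝ^{d×d} such that T₁ A T₁⁻¹ has the block form [[A₁, X₂],[0, X₃]] with A₁ ∈ ℝ^{s_c×s_c}, X₂ ∈ ℝ^{s_c×(d−s_c)}, X₃ ∈ ℝ^{(d−s_c)×(d−s_c)}, and T₁ B = [B₁; 0] with B₁ ∈ ℝ^{s_c×d_u}. Suppose moreover that the relevant disturbances matrix RD = [X₂ᵀ, X₃ᵀX₂ᵀ, (X₃ᵀ)²X₂ᵀ, …, (X₃ᵀ)^{d−s_c}X₂ᵀ] has rank s_e. Then there exists an invertible T ∈ ℝ^{d×d} such that T A T⁻¹ and T B are in the PC-LQ block form with block sizes (s_c, s_e, d−s_c−s_e): T A T⁻¹ = [[A₁, A₁₂, 0],[0, A₂, 0],[0, A₃₂, A₃]] with A₂ ∈ ℝ^{s_e×s_e}, and T B = [B₁; 0; 0]. -/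
open Matrix in
lemma adapted_matrix {n se : ℕ} (W : Submodule ℝ (Fin n → ℝ)) (hW : Module.finrank ℝ W = se) :
    ∃ S : Matrix (Fin n) (Fin n) ℝ, IsUnit S.det ∧ (∀ i : Fin n, (i : ℕ) < se → S i ∈ W) ∧
      (∀ w ∈ W, ∀ j : Fin n, se ≤ (j : ℕ) → (w ᵥ* S⁻¹) j = 0) := by
  obtain ⟨W', hc⟩ := W.exists_isCompl
  have hsum := Submodule.finrank_add_eq_of_isCompl hc
  simp only [Module.finrank_fin_fun] at hsum
  obtain ⟨m, hm⟩ : ∃ m, Module.finrank ℝ W' = m := ⟨_, rfl⟩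
  rw [hW, hm] at hsum
  let b0 := ((Module.finBasisOfFinrankEq ℝ W hW).prod (Module.finBasisOfFinrankEq ℝ W' hm)).map
    (Submodule.prodEquivOfIsCompl W W' hc)
  let e : Fin se ⊕ Fin m ≃ Fin n := finSumFinEquiv.trans (finCongr hsum)
  let b := b0.reindex e
  have hinl : ∀ i : Fin se, b0 (Sum.inl i) ∈ W := by
    intro i; simp [b0]
  have hrep : ∀ w ∈ W, ∀ j : Fin m, b0.repr w (Sum.inr j) = 0 := by
    intro w hw j
    have h1 : (Submodule.prodEquivOfIsCompl W W' hc).symm w = (⟨w, hw⟩, 0) := by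
      rw [LinearEquiv.symm_apply_eq]; simp
    simp [b0, h1]
  have hb : ∀ i, b i = b0 (e.symm i) := fun i => by simp [b]
  refine ⟨Matrix.of (fun i => b i), ?_, ?_, ?_⟩
  · rw [← Matrix.isUnit_iff_isUnit_det, ← Matrix.linearIndependent_rows_iff_isUnit]
    exact b.linearIndependent
  · intro i hi
    have : e.symm i = Sum.inl ⟨i, hi⟩ := by
      rw [Equiv.symm_apply_eq]; ext; simp [e]
    change b i ∈ W
    rw [hb, this]; exact hinl _
  · intro w hw j hj
    have hu : IsUnit (Matrix.of (fun i => b i)).det := by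
      rw [← Matrix.isUnit_iff_isUnit_det, ← Matrix.linearIndependent_rows_iff_isUnit]
      exact b.linearIndependent
    have h2 : w = (fun i => b.repr w i) ᵥ* Matrix.of (fun i => b i) := by
      conv_lhs => rw [← b.sum_repr w]
      ext k
      simp [Matrix.vecMul, dotProduct, Finset.sum_apply]
    have h3 : w ᵥ* (Matrix.of (fun i => b i))⁻¹ = fun i => b.repr w i := by
      conv_lhs => rw [h2]
      rw [Matrix.vecMul_vecMul, Matrix.mul_nonsing_inv _ hu, Matrix.vecMul_one]
    rw [h3]
    have : e.symm j = Sum.inr ⟨j - se, by omega⟩ := by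
      rw [Equiv.symm_apply_eq]; ext; simp [e]; omega
    simp only [b, Module.Basis.repr_reindex_apply, this]
    exact hrep w hw _

open Matrix in
lemma krylov {n s se : ℕ} (X₂ : Matrix (Fin s) (Fin n) ℝ) (X₃ : Matrix (Fin n) (Fin n) ℝ)
    (RD : Matrix (Fin n) (Fin (n + 1) × Fin s) ℝ)
    (hRD : ∀ (i : Fin n) (p : Fin (n + 1) × Fin s),
      RD i p = (X₃.transpose ^ (p.1 : ℕ) * X₂.transpose) i p.2)
    (hrank : RD.rank = se) :
    ∃ W : Submodule ℝ (Fin n → ℝ), Module.finrank ℝ W = se ∧ (∀ i, X₂ i ∈ W) ∧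
      ∀ w ∈ W, w ᵥ* X₃ ∈ W := by
  have hcol : ∀ p, RD.col p = (X₃ᵀ ^ (p.1 : ℕ)) *ᵥ X₂ p.2 := by
    intro p; ext i
    change RD i p = _
    rw [hRD]; rfl
  let W := Submodule.span ℝ (Set.range RD.col)
  have hk : ∀ k i, k < n + 1 → (X₃ᵀ ^ k) *ᵥ X₂ i ∈ W := by
    intro k i h
    exact Submodule.subset_span ⟨(⟨k, h⟩, i), hcol _⟩
  have hall : ∀ k i, (X₃ᵀ ^ k) *ᵥ X₂ i ∈ W := by
    intro k i
    have hdeg : ((Polynomial.X : Polynomial ℝ) ^ k %ₘ X₃ᵀ.charpoly).natDegree < n + 1 := by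
      have h1 := Polynomial.natDegree_modByMonic_le ((Polynomial.X : Polynomial ℝ) ^ k)
        (Matrix.charpoly_monic X₃ᵀ)
      rw [Matrix.charpoly_natDegree_eq_dim, Fintype.card_fin] at h1
      omega
    rw [Matrix.pow_eq_aeval_mod_charpoly, Polynomial.aeval_eq_sum_range' hdeg,
      Matrix.sum_mulVec]
    refine Submodule.sum_mem _ fun j hj => ?_
    rw [Matrix.smul_mulVec]
    exact Submodule.smul_mem _ _ (hk j i (Finset.mem_range.1 hj))
  refine ⟨W, ?_, ?_, ?_⟩
  · rw [← hrank, Matrix.rank, Matrix.range_mulVecLin]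
  · intro i; simpa using hall 0 i
  · intro w hw
    have : W ≤ W.comap X₃ᵀ.mulVecLin := by
      refine Submodule.span_le.2 ?_
      rintro _ ⟨p, rfl⟩
      change X₃ᵀ *ᵥ RD.col p ∈ W
      rw [hcol, Matrix.mulVec_mulVec, ← pow_succ']
      exact hall _ _
    have h := this hw
    rw [Submodule.mem_comap, Matrix.mulVecLin_apply, Matrix.mulVec_transpose] at h
    exact h

/-- Suppose an invertible `T₁` puts `(A, B)` in the partially-controllable
block form `T₁ A T₁⁻¹ = [[A₁, X₂], [0, X₃]]`, `T₁ B = [B₁; 0]` with first block of size `sc`,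
and the relevant disturbances matrix `RD = [X₂ᵀ, X₃ᵀX₂ᵀ, …, (X₃ᵀ)^{d-sc} X₂ᵀ]` has rank `se`.
Then there is an invertible `T` putting `(A, B)` in PC-LQ block form with block sizes
`(sc, se, d - sc - se)`, keeping the same blocks `A₁` and `B₁`. -/
theorem stmt_4 {d du sc se : ℕ} (hd : sc + se ≤ d)
    (A : Matrix (Fin d) (Fin d) ℝ) (B : Matrix (Fin d) (Fin du) ℝ)
    (T₁ : Matrix (Fin d) (Fin d) ℝ) (hT₁ : IsUnit T₁.det)
    (M : Matrix (Fin d) (Fin d) ℝ) (hM : M = T₁ * A * T₁⁻¹)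
    -- the lower-left block of `T₁ A T₁⁻¹` is zero
    (hlow : ∀ i j : Fin d, sc ≤ (i : ℕ) → (j : ℕ) < sc → M i j = 0)
    -- the lower block of `T₁ B` is zero
    (hB : ∀ (i : Fin d) (k : Fin du), sc ≤ (i : ℕ) → (T₁ * B) i k = 0)
    -- `X₂` is the upper-right block and `X₃` the lower-right block of `T₁ A T₁⁻¹`
    (X₂ : Matrix (Fin sc) (Fin (d - sc)) ℝ)
    (hX₂ : ∀ (i : Fin sc) (j : Fin (d - sc)),
      X₂ i j = M ⟨i, by omega⟩ ⟨sc + (j : ℕ), by omega⟩)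
    (X₃ : Matrix (Fin (d - sc)) (Fin (d - sc)) ℝ)
    (hX₃ : ∀ i j : Fin (d - sc),
      X₃ i j = M ⟨sc + (i : ℕ), by omega⟩ ⟨sc + (j : ℕ), by omega⟩)
    -- the relevant disturbances matrix `RD = [X₂ᵀ, X₃ᵀX₂ᵀ, …, (X₃ᵀ)^{d-sc} X₂ᵀ]`
    (RD : Matrix (Fin (d - sc)) (Fin (d - sc + 1) × Fin sc) ℝ)
    (hRD : ∀ (i : Fin (d - sc)) (p : Fin (d - sc + 1) × Fin sc),
      RD i p = (X₃.transpose ^ (p.1 : ℕ) * X₂.transpose) i p.2)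
    (hrank : RD.rank = se) :
    ∃ T : Matrix (Fin d) (Fin d) ℝ, IsUnit T.det ∧
      -- `T A T⁻¹` is in PC-LQ block form with block sizes `(sc, se, d - sc - se)`
      (∀ i j : Fin d, sc ≤ (i : ℕ) → (j : ℕ) < sc → (T * A * T⁻¹) i j = 0) ∧
      (∀ i j : Fin d, (i : ℕ) < sc + se → sc + se ≤ (j : ℕ) → (T * A * T⁻¹) i j = 0) ∧
      (∀ (i : Fin d) (k : Fin du), sc ≤ (i : ℕ) → (T * B) i k = 0) ∧
      -- with the same first diagonal block `A₁` and the same first block `B₁` of `T₁ B`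
      (∀ i j : Fin d, (i : ℕ) < sc → (j : ℕ) < sc → (T * A * T⁻¹) i j = M i j) ∧
      (∀ (i : Fin d) (k : Fin du), (i : ℕ) < sc → (T * B) i k = (T₁ * B) i k) := by
  obtain ⟨W, hWr, hW2, hW3⟩ := krylov X₂ X₃ RD hRD hrank
  obtain ⟨S, hS, hSW, hSz⟩ := adapted_matrix W hWr
  have hsc : sc + (d - sc) = d := by omega
  let e : Fin sc ⊕ Fin (d - sc) ≃ Fin d := finSumFinEquiv.trans (finCongr hsc)
  have el : ∀ i : Fin sc, e (Sum.inl i) = ⟨i, by omega⟩ := fun i => by ext; simp [e]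
  have er : ∀ i : Fin (d - sc), e (Sum.inr i) = ⟨sc + i, by omega⟩ := fun i => by ext; simp [e]
  let A₁ : Matrix (Fin sc) (Fin sc) ℝ := fun i j => M (e (Sum.inl i)) (e (Sum.inl j))
  have hMb : M = (Matrix.fromBlocks A₁ X₂ 0 X₃).submatrix e.symm e.symm := by
    ext i j
    obtain ⟨i, rfl⟩ := e.surjective i
    obtain ⟨j, rfl⟩ := e.surjective j
    rw [Matrix.submatrix_apply, Equiv.symm_apply_apply, Equiv.symm_apply_apply]
    rcases i with i | i <;> rcases j with j | j
    · rfl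
    · rw [el, er]; simp [hX₂]
    · rw [el, er, hlow _ _ (by simp) (by simp)]; simp
    · rw [er, er]; simp [hX₃]
  let R : Matrix (Fin d) (Fin d) ℝ := (Matrix.fromBlocks 1 0 0 S).submatrix e.symm e.symm
  let R' : Matrix (Fin d) (Fin d) ℝ := (Matrix.fromBlocks 1 0 0 S⁻¹).submatrix e.symm e.symm
  have hRR : R * R' = 1 := by
    simp only [R, R']
    rw [Matrix.submatrix_mul_equiv, Matrix.fromBlocks_multiply]
    simp [Matrix.mul_nonsing_inv _ hS]
  have hRdet : IsUnit R.det := Matrix.isUnit_det_of_right_inverse hRR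
  have hRinv : R⁻¹ = R' := Matrix.inv_eq_right_inv hRR
  have hT : R * T₁ * A * (R * T₁)⁻¹ =
      (Matrix.fromBlocks A₁ (X₂ * S⁻¹) 0 (S * X₃ * S⁻¹)).submatrix e.symm e.symm := by
    have h1 : R * T₁ * A * (R * T₁)⁻¹ = R * M * R' := by
      rw [Matrix.mul_inv_rev, hRinv, hM]; simp only [Matrix.mul_assoc]
    rw [h1, hMb]
    simp only [R, R']
    rw [Matrix.submatrix_mul_equiv, Matrix.submatrix_mul_equiv, Matrix.fromBlocks_multiply,
      Matrix.fromBlocks_multiply]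
    simp
  have hRB : ∀ i k, (R * T₁ * B) i k = (R * (T₁ * B)) i k := fun i k => by
    rw [Matrix.mul_assoc]
  have hsum : ∀ i k, (R * (T₁ * B)) (e i) k = ∑ x : Fin sc ⊕ Fin (d - sc),
      Matrix.fromBlocks 1 0 0 S i x * (T₁ * B) (e x) k := by
    intro i k
    rw [Matrix.mul_apply, ← e.sum_comp]
    simp [R]
  have hBr : ∀ (i : Fin (d - sc)) k, (T₁ * B) (e (Sum.inr i)) k = 0 := by
    intro i k; rw [er]; exact hB _ _ (by simp)
  refine ⟨R * T₁, ?_, ?_, ?_, ?_, ?_, ?_⟩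
  · rw [Matrix.det_mul]; exact hRdet.mul hT₁
  · intro i j hi hj
    obtain ⟨i, rfl⟩ := e.surjective i
    obtain ⟨j, rfl⟩ := e.surjective j
    rw [hT, Matrix.submatrix_apply, Equiv.symm_apply_apply, Equiv.symm_apply_apply]
    rcases i with i | i <;> rcases j with j | j <;> simp only [el, er] at hi hj
    · omega
    · omega
    · simp
    · omega
  · intro i j hi hj
    obtain ⟨i, rfl⟩ := e.surjective i
    obtain ⟨j, rfl⟩ := e.surjective j
    rw [hT, Matrix.submatrix_apply, Equiv.symm_apply_apply, Equiv.symm_apply_apply]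
    rcases i with i | i <;> rcases j with j | j <;> simp only [el, er] at hi hj
    · omega
    · exact hSz _ (hW2 i) j (by omega)
    · simp
    · exact hSz _ (hW3 _ (hSW i (by omega))) j (by omega)
  · intro i k hi
    obtain ⟨i, rfl⟩ := e.surjective i
    rw [hRB, hsum]
    rcases i with i | i <;> simp only [el, er] at hi
    · omega
    · simp [hBr]
  · intro i j hi hj
    obtain ⟨i, rfl⟩ := e.surjective i
    obtain ⟨j, rfl⟩ := e.surjective j
    rw [hT, Matrix.submatrix_apply, Equiv.symm_apply_apply, Equiv.symm_apply_apply]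
    rcases i with i | i <;> rcases j with j | j <;> simp only [el, er] at hi hj
    · rfl
    · omega
    · omega
    · omega
  · intro i k hi
    obtain ⟨i, rfl⟩ := e.surjective i
    rw [hRB, hsum]
    rcases i with i | i <;> simp only [el, er] at hi
    · simp [hBr, Matrix.one_apply]
    · omega
end

section
/- Let d, d_u, s_c, s be natural numbers with s_c ≤ s ≤ d, let A ∈ ℝ^{d×d} and B ∈ ℝ^{d×d_u}. The following are equivalent. (i) There exist orthogonal projection matrices P_c and P_r in ℝ^{d×d} such that: the column span of B is contained in the range of P_c, the range of P_c is contained in the range of P_r, rank(P_c) = s_c, rank(P_r) = s, A P_c = P_c A P_c (the range of P_c is A-invariant), (I − P_c)Aᵀ P_r = P_r (I − P_c)Aᵀ P_r (the range of P_r is invariant under (I − P_c)Aᵀ), and A = P_c A P_c + P_r A (P_r − P_c) + (I − P_r) A (I − P_c). (ii) There exists an orthogonal matrix U ∈ ℝ^{d×d} such that U A Uᵀ and U B are in the PC-LQ block form with block sizes (s_c, s − s_c, d − s): U A Uᵀ = [[A₁, A₁₂, 0],[0, A₂, 0],[0, A₃₂, A₃]] with A₁ ∈ ℝ^{s_c×s_c},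 A₂ ∈ ℝ^{(s−s_c)×(s−s_c)}, and U B = [B₁; 0; 0] with B₁ ∈ ℝ^{s_c×d_u}. -/
open Matrix in
lemma aux_range {m n : ℕ} (P : Matrix (Fin m) (Fin m) ℝ) (hP : P * P = P)
    (B : Matrix (Fin m) (Fin n) ℝ) :
    LinearMap.range B.mulVecLin ≤ LinearMap.range P.mulVecLin ↔ P * B = B := by
  constructor
  · intro h
    apply Matrix.ext_of_mulVec_single
    intro j
    obtain ⟨w, hw⟩ := h ⟨Pi.single j 1, rfl⟩
    simp only [Matrix.mulVecLin_apply] at hw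
    rw [← Matrix.mulVec_mulVec, ← hw, Matrix.mulVec_mulVec, hP]
  · rintro h _ ⟨v, rfl⟩
    refine ⟨B *ᵥ v, ?_⟩
    simp only [Matrix.mulVecLin_apply]
    rw [Matrix.mulVec_mulVec, h]

/-- The coordinate projection onto the first `k` coordinates. -/
def Ek (d k : ℕ) : Matrix (Fin d) (Fin d) ℝ :=
  Matrix.diagonal (fun i => if (i : ℕ) < k then 1 else 0)

lemma Ek_mul {d k l : ℕ} (h : k ≤ l) : Ek d l * Ek d k = Ek d k := by
  unfold Ek
  rw [Matrix.diagonal_mul_diagonal]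
  congr 1
  ext i
  split_ifs <;> first | omega | simp

lemma Ek_symm (d k : ℕ) : (Ek d k).transpose = Ek d k := by
  simp [Ek]

lemma Ek_rank {d k : ℕ} (h : k ≤ d) : (Ek d k).rank = k := by
  unfold Ek
  rw [Matrix.rank_diagonal, Fintype.card_subtype]
  simp only [ne_eq, ite_eq_right_iff, one_ne_zero, imp_false, not_not]
  rw [Fin.card_filter_val_lt]
  omega

lemma aux_seg {d k : ℕ} (S : Finset (Fin d)) (hS : ∀ i j, i ≤ j → j ∈ S → i ∈ S)
    (hk : S.card = k) (i : Fin d) : i ∈ S ↔ (i : ℕ) < k := by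
  constructor
  · intro hi
    have h : Finset.Iic i ⊆ S := fun j hj => hS j i (Finset.mem_Iic.1 hj) hi
    have := Finset.card_le_card h
    rw [Fin.card_Iic] at this
    omega
  · intro hi
    by_contra hn
    have h : S ⊆ Finset.Iio i := fun j hj => by
      rw [Finset.mem_Iio]
      by_contra hc
      exact hn (hS i j (not_lt.1 hc) hj)
    have := Finset.card_le_card h
    rw [Fin.card_Iio] at this
    omega

lemma aux_spec {d : ℕ} (M : Matrix (Fin d) (Fin d) ℝ) (hM : M.IsSymm) :
    ∃ (U : Matrix (Fin d) (Fin d) ℝ) (f : Fin d → ℝ), U.transpose * U = 1 ∧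
      U * U.transpose = 1 ∧ Antitone f ∧ U * M * U.transpose = Matrix.diagonal f := by
  have hH : M.IsHermitian := by
    rw [Matrix.IsHermitian, Matrix.conjTranspose_eq_transpose_of_trivial]; exact hM
  let V : Matrix (Fin d) (Fin d) ℝ := hH.eigenvectorUnitary
  have hV1 : V.transpose * V = 1 := by
    have := Unitary.coe_star_mul_self hH.eigenvectorUnitary
    rwa [Matrix.star_eq_conjTranspose, Matrix.conjTranspose_eq_transpose_of_trivial] at this
  have hV2 : V * V.transpose = 1 := mul_eq_one_comm.1 hV1
  have hs : M = V * Matrix.diagonal hH.eigenvalues * V.transpose := by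
    have := hH.spectral_theorem
    rw [Unitary.conjStarAlgAut_apply] at this
    rw [Matrix.star_eq_conjTranspose, Matrix.conjTranspose_eq_transpose_of_trivial] at this
    exact this
  generalize hH.eigenvalues = ev at hs
  have hs2 : V.transpose * M * V = Matrix.diagonal ev := by
    calc _ = (V.transpose * V) * Matrix.diagonal ev * (V.transpose * V) := by
          conv_lhs => rw [hs]
          simp only [Matrix.mul_assoc]
      _ = _ := by rw [hV1]; simp
  let σ := Tuple.sort (fun i => - ev i)
  have hσ : Monotone ((fun i => - ev i) ∘ σ) := Tuple.monotone_sort _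
  have hU2 : V.transpose.submatrix σ id * (V.transpose.submatrix σ id).transpose = 1 := by
    rw [Matrix.transpose_submatrix, Matrix.transpose_transpose,
      ← Matrix.submatrix_mul _ _ _ _ _ Function.bijective_id, hV1]
    exact Matrix.submatrix_one_equiv σ
  refine ⟨V.transpose.submatrix σ id, ev ∘ σ, mul_eq_one_comm.1 hU2, hU2, ?_, ?_⟩
  · intro i j hij
    have := hσ hij
    simpa using this
  · rw [Matrix.transpose_submatrix, Matrix.transpose_transpose]
    have : M = M.submatrix id id := by simp
    rw [this, ← Matrix.submatrix_mul _ _ _ _ _ Function.bijective_id,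
      ← Matrix.submatrix_mul _ _ _ _ _ Function.bijective_id, hs2]
    ext i j
    simp [Matrix.diagonal_apply]

lemma aux_rank {d : ℕ} (U P : Matrix (Fin d) (Fin d) ℝ) (h1 : U.transpose * U = 1) :
    (U * P * U.transpose).rank = P.rank := by
  have h2 : U * U.transpose = 1 := mul_eq_one_comm.1 h1
  have hu : IsUnit U := IsUnit.of_mul_eq_one _ h2
  have hu' : IsUnit U.transpose := IsUnit.of_mul_eq_one _ h1
  rw [Matrix.rank_mul_eq_left_of_isUnit_det _ _ ((Matrix.isUnit_iff_isUnit_det _).1 hu'),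
    Matrix.rank_mul_eq_right_of_isUnit_det _ _ ((Matrix.isUnit_iff_isUnit_det _).1 hu)]

lemma aux_conj_mul {d n : ℕ} (U P : Matrix (Fin d) (Fin d) ℝ) (Q : Matrix (Fin d) (Fin n) ℝ)
    (h1 : U.transpose * U = 1) :
    (U * P * U.transpose) * (U * Q) = U * (P * Q) := by
  calc _ = U * P * (U.transpose * U) * Q := by simp only [Matrix.mul_assoc]
    _ = _ := by rw [h1]; simp only [Matrix.mul_assoc, Matrix.mul_one]

lemma aux_conj {d : ℕ} (U P Q : Matrix (Fin d) (Fin d) ℝ) (h1 : U.transpose * U = 1) :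
    (U * P * U.transpose) * (U * Q * U.transpose) = U * (P * Q) * U.transpose := by
  rw [← Matrix.mul_assoc, aux_conj_mul U P Q h1]

lemma aux_diag {d k : ℕ} (g : Fin d → ℝ) (hg : ∀ i j, i ≤ j → g j = 1 → g i = 1)
    (h01 : Matrix.diagonal g * Matrix.diagonal g = Matrix.diagonal g)
    (hr : (Matrix.diagonal g).rank = k) : Matrix.diagonal g = Ek d k := by
  have h01' : ∀ i, g i = 0 ∨ g i = 1 := by
    intro i
    rw [Matrix.diagonal_mul_diagonal] at h01
    have := congrFun (Matrix.diagonal_injective h01) i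
    have h : g i * (g i - 1) = 0 := by linarith
    rcases mul_eq_zero.1 h with h | h
    · exact Or.inl h
    · exact Or.inr (by linarith)
  rw [Matrix.rank_diagonal, Fintype.card_subtype] at hr
  have hm : ∀ i, i ∈ Finset.univ.filter (fun i => g i ≠ 0) ↔ g i = 1 := by
    intro i
    simp only [Finset.mem_filter, Finset.mem_univ, true_and]
    rcases h01' i with h | h <;> simp [h]
  have key := aux_seg _ (fun i j hij hj => (hm i).2 (hg i j hij ((hm j).1 hj))) hr
  unfold Ek
  congr 1
  ext i
  have k1 := (hm i).symm.trans (key i)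
  split_ifs with h
  · exact k1.2 h
  · exact (h01' i).resolve_right (fun h' => h (k1.1 h'))

lemma aux_U {d sc s : ℕ} (Pc Pr : Matrix (Fin d) (Fin d) ℝ)
    (hc : Pc.IsSymm) (hc2 : Pc * Pc = Pc) (hr : Pr.IsSymm) (hr2 : Pr * Pr = Pr)
    (hrc : Pr * Pc = Pc) (kc : Pc.rank = sc) (kr : Pr.rank = s) :
    ∃ U : Matrix (Fin d) (Fin d) ℝ, U.transpose * U = 1 ∧ U * U.transpose = 1 ∧
      U * Pc * U.transpose = Ek d sc ∧ U * Pr * U.transpose = Ek d s := by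
  have hcr : Pc * Pr = Pc := by
    have := congrArg Matrix.transpose hrc
    rwa [Matrix.transpose_mul, hc.eq, hr.eq] at this
  obtain ⟨U, f, h1, h2, hf, hD⟩ := aux_spec (Pc + Pr) (hc.add hr)
  have hMM : (Pc + Pr) * (Pc + Pr) = (2 : ℝ) • Pc + (Pc + Pr) := by
    rw [add_mul, mul_add, mul_add, hc2, hr2, hrc, hcr, two_smul]
  have e1 : U * Pc * U.transpose = Matrix.diagonal (fun i => (f i * f i - f i) / 2) := by
    have h3 := aux_conj U (Pc + Pr) (Pc + Pr) h1
    rw [hMM, mul_add U ((2 : ℝ) • Pc), add_mul (U * ((2 : ℝ) • Pc)), hD, Matrix.diagonal_mul_diagonal, Matrix.mul_smul,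
      Matrix.smul_mul] at h3
    ext i j
    have h4 := congrFun (congrFun h3 i) j
    simp only [Matrix.add_apply, Matrix.smul_apply, smul_eq_mul] at h4
    rcases eq_or_ne i j with rfl | hij
    · simp only [Matrix.diagonal_apply_eq] at h4 ⊢
      linarith
    · simp only [Matrix.diagonal_apply_ne _ hij] at h4 ⊢
      linarith
  have e2 : U * Pr * U.transpose = Matrix.diagonal (fun i => f i - (f i * f i - f i) / 2) := by
    rw [← Matrix.diagonal_sub, ← e1, ← hD]
    simp only [mul_add, add_mul, add_sub_cancel_left]
  have i1 := aux_conj U Pc Pc h1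
  rw [hc2, e1] at i1
  have i2 := aux_conj U Pr Pr h1
  rw [hr2, e2] at i2
  have hval : ∀ i, f i = 0 ∨ f i = 1 ∨ f i = 2 := by
    intro i
    rw [Matrix.diagonal_mul_diagonal] at i1 i2
    have a1 := congrFun (Matrix.diagonal_injective i1) i
    have a2 := congrFun (Matrix.diagonal_injective i2) i
    have b1 : (f i * f i - f i) / 2 = 0 ∨ (f i * f i - f i) / 2 = 1 := by
      have h : (f i * f i - f i) / 2 * ((f i * f i - f i) / 2 - 1) = 0 := by linarith
      rcases mul_eq_zero.1 h with h | h
      · exact Or.inl h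
      · exact Or.inr (by linarith)
    rcases b1 with b1 | b1
    · have h : f i * (f i - 1) = 0 := by linarith
      rcases mul_eq_zero.1 h with h | h
      · exact Or.inl h
      · exact Or.inr (Or.inl (by linarith))
    · rw [b1] at a2
      have h : (f i - 1) * (f i - 2) = 0 := by linarith
      rcases mul_eq_zero.1 h with h | h
      · exact Or.inr (Or.inl (by linarith))
      · exact Or.inr (Or.inr (by linarith))
  refine ⟨U, h1, h2, ?_, ?_⟩
  · rw [e1]
    refine aux_diag _ ?_ i1 (by rw [← e1, aux_rank _ _ h1, kc])
    intro i j hij hj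
    have := hf hij
    rcases hval i with h | h | h <;> rcases hval j with h' | h' | h' <;>
      simp only [h, h'] at hj this ⊢ <;>
      first | (norm_num; done) | (exfalso; linarith)
  · rw [e2]
    refine aux_diag _ ?_ i2 (by rw [← e2, aux_rank _ _ h1, kr])
    intro i j hij hj
    have := hf hij
    rcases hval i with h | h | h <;> rcases hval j with h' | h' | h' <;>
      simp only [h, h'] at hj this ⊢ <;>
      first | (norm_num; done) | (exfalso; linarith)

lemma aux_left {d n k : ℕ} (B : Matrix (Fin d) (Fin n) ℝ) :
    Ek d k * B = B ↔ ∀ (i : Fin d) (j : Fin n), k ≤ (i : ℕ) → B i j = 0 := by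
  rw [← Matrix.ext_iff]
  refine forall_congr' fun i => forall_congr' fun j => ?_
  simp only [Ek, Matrix.diagonal_mul]
  split_ifs with h
  · simp; omega
  · simp [not_lt.1 h, eq_comm]

lemma aux_c {d k : ℕ} (A : Matrix (Fin d) (Fin d) ℝ) :
    Ek d k * (A * Ek d k) = A * Ek d k ↔
      ∀ i j : Fin d, k ≤ (i : ℕ) → (j : ℕ) < k → A i j = 0 := by
  rw [aux_left]
  refine forall_congr' fun i => forall_congr' fun j => ?_
  simp [Ek, Matrix.mul_diagonal]

lemma aux_r {d k : ℕ} (A : Matrix (Fin d) (Fin d) ℝ) :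
    Ek d k * A * Ek d k = Ek d k * A ↔
      ∀ i j : Fin d, (i : ℕ) < k → k ≤ (j : ℕ) → A i j = 0 := by
  rw [← Matrix.ext_iff]
  refine forall_congr' fun i => forall_congr' fun j => ?_
  simp only [Ek, Matrix.diagonal_mul, Matrix.mul_diagonal]
  by_cases h : (i : ℕ) < k <;> by_cases h' : (j : ℕ) < k <;> simp [h, h', eq_comm]
  omega

lemma aux_cancel {d n : ℕ} (U : Matrix (Fin d) (Fin d) ℝ) (X Y : Matrix (Fin d) (Fin n) ℝ)
    (h1 : U.transpose * U = 1) (h : U * X = U * Y) : X = Y := by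
  have := congrArg (fun Z => U.transpose * Z) h
  simpa only [← Matrix.mul_assoc, h1, Matrix.one_mul] using this

lemma aux_main {d du sc s : ℕ} (A Pc Pr U : Matrix (Fin d) (Fin d) ℝ)
    (B : Matrix (Fin d) (Fin du) ℝ) (h1 : U.transpose * U = 1)
    (ec : U * Pc * U.transpose = Ek d sc) (er : U * Pr * U.transpose = Ek d s) :
    (Pc * (A * Pc) = A * Pc ∧ Pr * A * Pr = Pr * A ∧ Pc * B = B) ↔
      ((∀ i j : Fin d, sc ≤ (i : ℕ) → (j : ℕ) < sc → (U * A * U.transpose) i j = 0) ∧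
      (∀ i j : Fin d, (i : ℕ) < s → s ≤ (j : ℕ) → (U * A * U.transpose) i j = 0) ∧
      (∀ (i : Fin d) (k : Fin du), sc ≤ (i : ℕ) → (U * B) i k = 0)) := by
  have h2 : U * U.transpose = 1 := mul_eq_one_comm.1 h1
  have cc : ∀ X Y : Matrix (Fin d) (Fin d) ℝ,
      U * X * U.transpose = U * Y * U.transpose ↔ X = Y := by
    intro X Y
    refine ⟨fun h => ?_, fun h => by rw [h]⟩
    have := congrArg (fun Z => Z * U) h
    simp only [Matrix.mul_assoc, h1, Matrix.mul_one] at this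
    exact aux_cancel U X Y h1 this
  rw [← aux_c, ← aux_r, ← aux_left, ← ec, ← er]
  simp only [aux_conj _ _ _ h1, aux_conj_mul _ _ _ h1, cc]
  refine and_congr Iff.rfl (and_congr Iff.rfl ⟨fun h => by rw [h], aux_cancel U _ _ h1⟩)

lemma aux_alg {d : ℕ} (A Pc Pr : Matrix (Fin d) (Fin d) ℝ)
    (hc : Pc.IsSymm) (hr : Pr.IsSymm) (hr2 : Pr * Pr = Pr)
    (hrc : Pr * Pc = Pc) (hA : Pc * (A * Pc) = A * Pc) :
    ((1 - Pc) * A.transpose * Pr = Pr * ((1 - Pc) * A.transpose * Pr) ∧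
      A = Pc * A * Pc + Pr * A * (Pr - Pc) + (1 - Pr) * A * (1 - Pc)) ↔
    Pr * A * Pr = Pr * A := by
  have e : Pc * A * Pc + Pr * A * (Pr - Pc) + (1 - Pr) * A * (1 - Pc) =
      A + (Pc * (A * Pc) - A * Pc) + (Pr * A * Pr - Pr * A) := by
    noncomm_ring
  rw [e, hA, sub_self, add_zero, left_eq_add, sub_eq_zero]
  refine ⟨fun h => h.2, fun h => ⟨?_, h⟩⟩
  have ht : Pr * A.transpose * Pr = A.transpose * Pr := by
    have := congrArg Matrix.transpose h
    simp only [Matrix.transpose_mul, hr.eq] at this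
    rw [Matrix.mul_assoc]; exact this
  rw [sub_mul, one_mul, sub_mul, mul_sub, ← Matrix.mul_assoc, ht, ← Matrix.mul_assoc,
    ← Matrix.mul_assoc, hrc]

/-- For `A ∈ ℝ^{d×d}`, `B ∈ ℝ^{d×d_u}` and `sc ≤ s ≤ d`, the following are
equivalent: (i) there are orthogonal projection matrices `Pc`, `Pr` with
`colspan B ⊆ range Pc ⊆ range Pr`, `rank Pc = sc`, `rank Pr = s`, the range of `Pc` is
`A`-invariant, the range of `Pr` is `(I - Pc)Aᵀ`-invariant, and
`A = Pc A Pc + Pr A (Pr - Pc) + (I - Pr) A (I - Pc)`; (ii) there is an orthogonal `U` such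
that `(U A Uᵀ, U B)` is in PC-LQ block form with block sizes `(sc, s - sc, d - s)`. -/
theorem stmt_5 {d du sc s : ℕ} (h1 : sc ≤ s) (h2 : s ≤ d)
    (A : Matrix (Fin d) (Fin d) ℝ) (B : Matrix (Fin d) (Fin du) ℝ) :
    (∃ Pc Pr : Matrix (Fin d) (Fin d) ℝ,
      Pc.IsSymm ∧ Pc * Pc = Pc ∧ Pr.IsSymm ∧ Pr * Pr = Pr ∧
      LinearMap.range B.mulVecLin ≤ LinearMap.range Pc.mulVecLin ∧
      LinearMap.range Pc.mulVecLin ≤ LinearMap.range Pr.mulVecLin ∧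
      Pc.rank = sc ∧ Pr.rank = s ∧
      A * Pc = Pc * (A * Pc) ∧
      (1 - Pc) * A.transpose * Pr = Pr * ((1 - Pc) * A.transpose * Pr) ∧
      A = Pc * A * Pc + Pr * A * (Pr - Pc) + (1 - Pr) * A * (1 - Pc)) ↔
    (∃ U : Matrix (Fin d) (Fin d) ℝ, U.transpose * U = 1 ∧ U * U.transpose = 1 ∧
      (∀ i j : Fin d, sc ≤ (i : ℕ) → (j : ℕ) < sc → (U * A * U.transpose) i j = 0) ∧
      (∀ i j : Fin d, (i : ℕ) < s → s ≤ (j : ℕ) → (U * A * U.transpose) i j = 0) ∧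
      (∀ (i : Fin d) (k : Fin du), sc ≤ (i : ℕ) → (U * B) i k = 0)) := by
  constructor
  · rintro ⟨Pc, Pr, hc, hc2, hr, hr2, hB, hcr, kc, kr, hA, hA2, hA3⟩
    rw [aux_range Pc hc2] at hB
    rw [aux_range Pr hr2] at hcr
    obtain ⟨U, u1, u2, ec, er⟩ := aux_U Pc Pr hc hc2 hr hr2 hcr kc kr
    exact ⟨U, u1, u2, (aux_main A Pc Pr U B u1 ec er).1
      ⟨hA.symm, (aux_alg A Pc Pr hc hr hr2 hcr hA.symm).1 ⟨hA2, hA3⟩, hB⟩⟩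
  · rintro ⟨U, u1, u2, h⟩
    have ut : U.transpose.transpose * U.transpose = 1 := by simpa using u2
    have cj := fun X Y => aux_conj U.transpose X Y ut
    have rk := fun X => aux_rank U.transpose X ut
    rw [Matrix.transpose_transpose] at cj rk
    have un : ∀ X : Matrix (Fin d) (Fin d) ℝ, U * (U.transpose * X * U) * U.transpose = X := by
      intro X
      calc _ = (U * U.transpose) * X * (U * U.transpose) := by simp only [Matrix.mul_assoc]
        _ = X := by rw [u2]; simp
    have sy : ∀ k, (U.transpose * Ek d k * U).IsSymm := by
      intro k
      rw [Matrix.IsSymm, Matrix.transpose_mul, Matrix.transpose_mul, Ek_symm,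
        Matrix.transpose_transpose, Matrix.mul_assoc]
    have id : ∀ k, (U.transpose * Ek d k * U) * (U.transpose * Ek d k * U) =
        U.transpose * Ek d k * U := by
      intro k
      rw [cj, Ek_mul le_rfl]
    have hcr : (U.transpose * Ek d s * U) * (U.transpose * Ek d sc * U) =
        U.transpose * Ek d sc * U := by
      rw [cj, Ek_mul h1]
    obtain ⟨a1, a2, a3⟩ := (aux_main A _ _ U B u1 (un (Ek d sc)) (un (Ek d s))).2 h
    obtain ⟨b1, b2⟩ := (aux_alg A _ _ (sy sc) (sy s) (id s) hcr a1).2 a2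
    exact ⟨_, _, sy sc, id sc, sy s, id s, (aux_range _ (id sc) B).2 a3,
      (aux_range _ (id s) _).2 hcr, by rw [rk, Ek_rank (h1.trans h2)], by rw [rk, Ek_rank h2],
      a1.symm, b1, b2⟩
end

section
/- Let A ∈ ℝ^{d×d} and B ∈ ℝ^{d×d_u} be in the PC-LQ block form with block sizes (s_c, s_e, d−s_c−s_e), let R ∈ ℝ^{d_u×d_u} be any matrix, let K = [K₁, K₂, 0] ∈ ℝ^{d_u×d} be a feedback gain whose third block of columns is zero, and let I₁ ∈ ℝ^{d×d} be the diagonal matrix with I₁(i,i) = 1 for each index i in the first block (the first s_c coordinates) and I₁(i,i) = 0 otherwise. Set M = A + BK. Then for every t ≥ 0, the matrix (Mᵀ)ᵗ (I₁ + Kᵀ R K) Mᵗ has all entries equal to zero in every row and every column whose index belongs to the third block (the last d−s_c−s_e coordinates). Consequently, if the series Σ_{t=0}^∞ (Mᵀ)ᵗ (I₁ + Kᵀ R K) Mᵗ is summable with sum P_K, then every entry of P_K in a third-block row or third-block column is zero. -/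
/-- Let `(A, B)` be in PC-LQ block form with block sizes
`(sc, se, d - sc - se)`, `R` arbitrary, `K = [K₁, K₂, 0]` a feedback gain whose third block
of columns vanishes, and `I₁` the diagonal matrix which is `1` exactly on the first block.
With `M = A + BK`, every matrix `(Mᵀ)ᵗ (I₁ + Kᵀ R K) Mᵗ` has zero entries in all rows and
columns indexed by the third block; consequently so does any sum `P_K` of the series. -/
theorem stmt_6 {d du sc se : ℕ}
    (A : Matrix (Fin d) (Fin d) ℝ) (B : Matrix (Fin d) (Fin du) ℝ)
    -- PC-LQ block form of `(A, B)`
    (hA1 : ∀ i j : Fin d, sc ≤ (i : ℕ) → (j : ℕ) < sc → A i j = 0)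
    (hA2 : ∀ i j : Fin d, (i : ℕ) < sc + se → sc + se ≤ (j : ℕ) → A i j = 0)
    (hB : ∀ (i : Fin d) (k : Fin du), sc ≤ (i : ℕ) → B i k = 0)
    (R : Matrix (Fin du) (Fin du) ℝ)
    (K : Matrix (Fin du) (Fin d) ℝ)
    (hK : ∀ (k : Fin du) (j : Fin d), sc + se ≤ (j : ℕ) → K k j = 0)
    (I₁ : Matrix (Fin d) (Fin d) ℝ)
    (hI₁ : I₁ = Matrix.diagonal fun i : Fin d => if (i : ℕ) < sc then (1 : ℝ) else 0)
    (M : Matrix (Fin d) (Fin d) ℝ) (hM : M = A + B * K) :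
    (∀ t : ℕ, ∀ i j : Fin d, sc + se ≤ (i : ℕ) ∨ sc + se ≤ (j : ℕ) →
      (M.transpose ^ t * (I₁ + K.transpose * R * K) * M ^ t) i j = 0) ∧
    ∀ PK : Matrix (Fin d) (Fin d) ℝ,
      HasSum (fun t : ℕ => M.transpose ^ t * (I₁ + K.transpose * R * K) * M ^ t) PK →
      ∀ i j : Fin d, sc + se ≤ (i : ℕ) ∨ sc + se ≤ (j : ℕ) → PK i j = 0 := by
  have hMz : ∀ i j : Fin d, (i : ℕ) < sc + se → sc + se ≤ (j : ℕ) → M i j = 0 := by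
    intro i j hi hj
    rw [hM, Matrix.add_apply, hA2 i j hi hj, Matrix.mul_apply, zero_add]
    exact Finset.sum_eq_zero fun k _ => by rw [hK k j hj, mul_zero]
  have h1 : ∀ t : ℕ, ∀ i j : Fin d, sc + se ≤ (i : ℕ) ∨ sc + se ≤ (j : ℕ) →
      (M.transpose ^ t * (I₁ + K.transpose * R * K) * M ^ t) i j = 0 := by
    intro t
    induction t with
    | zero =>
      intro i j h
      rw [pow_zero, pow_zero, one_mul, mul_one, Matrix.add_apply]
      have hd : I₁ i j = 0 := by
        rw [hI₁, Matrix.diagonal_apply]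
        split_ifs with h2 h3
        · subst h2
          omega
        · rfl
        · rfl
      rw [hd, zero_add]
      rcases h with h | h
      · rw [Matrix.mul_assoc, Matrix.mul_apply]
        exact Finset.sum_eq_zero fun k _ => by
          rw [Matrix.transpose_apply, hK k i h, zero_mul]
      · rw [Matrix.mul_apply]
        exact Finset.sum_eq_zero fun k _ => by rw [hK k j h, mul_zero]
    | succ t ih =>
      intro i j h
      have e : M.transpose ^ (t + 1) * (I₁ + K.transpose * R * K) * M ^ (t + 1)
          = M.transpose * (M.transpose ^ t * (I₁ + K.transpose * R * K) * M ^ t) * M := by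
        rw [pow_succ', pow_succ]
        simp only [Matrix.mul_assoc]
      rw [e]
      generalize M.transpose ^ t * (I₁ + K.transpose * R * K) * M ^ t = N at ih
      rcases h with h | h
      · rw [Matrix.mul_assoc, Matrix.mul_apply]
        refine Finset.sum_eq_zero fun k _ => ?_
        rcases lt_or_ge (k : ℕ) (sc + se) with hk | hk
        · rw [Matrix.transpose_apply, hMz k i hk h, zero_mul]
        · have : (N * M) k j = 0 := by
            rw [Matrix.mul_apply]
            exact Finset.sum_eq_zero fun l _ => by rw [ih k l (Or.inl hk), zero_mul]
          rw [this, mul_zero]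
      · rw [Matrix.mul_apply]
        refine Finset.sum_eq_zero fun k _ => ?_
        rcases lt_or_ge (k : ℕ) (sc + se) with hk | hk
        · rw [hMz k j hk h, mul_zero]
        · have : (M.transpose * N) i k = 0 := by
            rw [Matrix.mul_apply]
            exact Finset.sum_eq_zero fun l _ => by rw [ih l k (Or.inr hk), mul_zero]
          rw [this, zero_mul]
  refine ⟨h1, fun PK hP i j h => ?_⟩
  have h2 := Pi.hasSum.mp (Pi.hasSum.mp hP i) j
  have h3 : HasSum (fun _ : ℕ => (0 : ℝ)) (PK i j) := by
    convert h2 using 2 with t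
    exact (h1 t i j h).symm
  exact h3.unique hasSum_zero
end

section
/- Let A ∈ ℝ^{d×d} and B ∈ ℝ^{d×d_u} be in the PC-LQ block form with block sizes (s_c, s_e, d−s_c−s_e), let I be any set of coordinate indices contained in the second and third blocks (i.e., every i ∈ I satisfies i > s_c), let K ∈ ℝ^{d_u×d} be a feedback gain such that every complex eigenvalue of A + BK has modulus strictly less than 1, and let x ∈ ℝ^d. Then the series Σ_{t=0}^∞ Σ_{i∈I} (((A + BK)ᵗ x)ᵢ)² converges, and its value equals Σ_{t=0}^∞ Σ_{i∈I} ((Aᵗ x)ᵢ)²; in particular this value does not depend on K. -/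
open Filter Topology in
attribute [local instance] Matrix.linftyOpNormedRing Matrix.linftyOpNormedAlgebra in
theorem aux_summable {d : ℕ} (N : Matrix (Fin d) (Fin d) ℝ)
    (hstab : ∀ z ∈ spectrum ℂ (N.map Complex.ofReal), ‖z‖ < 1) (x : Fin d → ℝ) (i : Fin d) :
    Summable (fun t : ℕ => (((N ^ t).mulVec x) i) ^ 2) := by
  haveI : Nonempty (Fin d) := ⟨i⟩
  set M := N.map Complex.ofReal with hM
  haveI : CompleteSpace (Matrix (Fin d) (Fin d) ℂ) := FiniteDimensional.complete ℂ _
  have h1 : spectralRadius ℂ M < ((1 : NNReal) : ENNReal) :=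
    spectrum.spectralRadius_lt_of_forall_lt M (fun z hz => by
      have := hstab z hz
      exact_mod_cast this)
  obtain ⟨r, hr1, hr2⟩ := ENNReal.lt_iff_exists_nnreal_btwn.1 h1
  have hr3 : r < 1 := by exact_mod_cast hr2
  have h2 := (spectrum.pow_nnnorm_pow_one_div_tendsto_nhds_spectralRadius M).eventually
    (gt_mem_nhds hr1)
  have hb : ∀ᶠ n : ℕ in atTop, ‖M ^ n‖ ≤ (r : ℝ) ^ n := by
    filter_upwards [h2, eventually_gt_atTop 0] with n hn hpos
    have hn' : (0 : ℝ) < n := by exact_mod_cast hpos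
    rw [one_div] at hn
    have := (ENNReal.rpow_inv_le_iff hn').1 hn.le
    rw [ENNReal.rpow_natCast] at this
    have h3 : ‖M ^ n‖₊ ≤ r ^ n := by exact_mod_cast this
    exact_mod_cast h3
  have hmap : ∀ t : ℕ, M ^ t = (N ^ t).map Complex.ofReal := fun t =>
    ((Matrix.map_pow N Complex.ofRealHom t)).symm
  have hentry : ∀ t : ℕ, |((N ^ t).mulVec x) i| ≤ ‖M ^ t‖ * ‖fun j => (x j : ℂ)‖ := by
    intro t
    have e : ((M ^ t).mulVec (fun j => (x j : ℂ))) i = (((N ^ t).mulVec x i : ℝ) : ℂ) := by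
      rw [hmap]
      simp [Matrix.mulVec, dotProduct]
    have h4 := Matrix.linfty_opNorm_mulVec (M ^ t) (fun j => (x j : ℂ))
    have h5 := norm_le_pi_norm ((M ^ t).mulVec (fun j => (x j : ℂ))) i
    rw [e, Complex.norm_real, Real.norm_eq_abs] at h5
    exact h5.trans h4
  have hgeo : Summable (fun t : ℕ => ((r : ℝ) ^ 2) ^ t * ‖fun j => (x j : ℂ)‖ ^ 2) :=
    (summable_geometric_of_lt_one (by positivity)
      (pow_lt_one₀ r.2 (by exact_mod_cast hr3) two_ne_zero)).mul_right _
  refine Summable.of_norm_bounded_eventually_nat hgeo ?_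
  filter_upwards [hb] with t ht
  have h6 : |((N ^ t).mulVec x) i| ≤ (r : ℝ) ^ t * ‖fun j => (x j : ℂ)‖ :=
    (hentry t).trans (mul_le_mul_of_nonneg_right ht (norm_nonneg _))
  rw [norm_pow, Real.norm_eq_abs]
  calc _ ≤ ((r : ℝ) ^ t * ‖fun j => (x j : ℂ)‖) ^ 2 := pow_le_pow_left₀ (abs_nonneg _) h6 2
    _ = _ := by ring

/-- Let `(A, B)` be in PC-LQ block form with block sizes
`(sc, se, d - sc - se)`, let `I` be a set of coordinates contained in the second and third
blocks, let `K` be a feedback gain such that every complex eigenvalue of `A + BK` has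
modulus `< 1`, and let `x ∈ ℝ^d`. Then `∑_{t} ∑_{i ∈ I} (((A + BK)ᵗ x)_i)²` converges and
equals `∑_{t} ∑_{i ∈ I} ((Aᵗ x)_i)²`; in particular it does not depend on `K`. -/
theorem stmt_9 {d du sc se : ℕ}
    (A : Matrix (Fin d) (Fin d) ℝ) (B : Matrix (Fin d) (Fin du) ℝ)
    -- PC-LQ block form of `(A, B)`
    (hA1 : ∀ i j : Fin d, sc ≤ (i : ℕ) → (j : ℕ) < sc → A i j = 0)
    (hA2 : ∀ i j : Fin d, (i : ℕ) < sc + se → sc + se ≤ (j : ℕ) → A i j = 0)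
    (hB : ∀ (i : Fin d) (k : Fin du), sc ≤ (i : ℕ) → B i k = 0)
    (I : Finset (Fin d)) (hI : ∀ i ∈ I, sc ≤ (i : ℕ))
    (K : Matrix (Fin du) (Fin d) ℝ)
    (hstab : ∀ z ∈ spectrum ℂ ((A + B * K).map Complex.ofReal), ‖z‖ < 1)
    (x : Fin d → ℝ) :
    Summable (fun t : ℕ => ∑ i ∈ I, ((((A + B * K) ^ t).mulVec x) i) ^ 2) ∧
    (∑' t : ℕ, ∑ i ∈ I, ((((A + B * K) ^ t).mulVec x) i) ^ 2) =
      ∑' t : ℕ, ∑ i ∈ I, (((A ^ t).mulVec x) i) ^ 2 := by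
  have key : ∀ (t : ℕ) (i : Fin d), sc ≤ (i : ℕ) →
      ((A + B * K) ^ t).mulVec x i = (A ^ t).mulVec x i := by
    intro t
    induction t with
    | zero => intro i _; simp
    | succ t ih =>
      intro i hi
      rw [pow_succ', pow_succ', ← Matrix.mulVec_mulVec, ← Matrix.mulVec_mulVec]
      simp only [Matrix.mulVec, dotProduct] at ih ⊢
      refine Finset.sum_congr rfl fun j _ => ?_
      have hBK : (B * K) i j = 0 := by
        rw [Matrix.mul_apply]
        exact Finset.sum_eq_zero fun k _ => by rw [hB i k hi, zero_mul]
      rw [Matrix.add_apply, hBK, add_zero]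
      by_cases hj : (j : ℕ) < sc
      · rw [hA1 i j hi hj, zero_mul, zero_mul]
      · rw [ih j (not_lt.1 hj)]
  refine ⟨summable_sum fun i _ => aux_summable _ hstab x i, ?_⟩
  refine tsum_congr fun t => Finset.sum_congr rfl fun i hi => ?_
  rw [key t i (hI i hi)]
end

section
/- Let ρ ∈ ℝ with |ρ| < 1. Define the 2×2 real matrices A = [[1, 1],[0, ρ]], Q = [[1, 0],[0, 0]], the 2×1 matrix B = [1; 0], and the scalar R = 1. Set p₁ = (1 + √5)/2, p₁₂ = p₁/(p₁² − ρ), p₂ = (p₁⁵ − p₁ρ² − p₁⁴)/((1 − ρ²)(p₁² − ρ)²), and P = [[p₁, p₁₂],[p₁₂, p₂]]. Then P satisfies the discrete algebraic Riccati equation P = Aᵀ P A + Q − (Bᵀ P A)ᵀ (R + Bᵀ P B)⁻¹ (Bᵀ P A) (where Bᵀ P B and Bᵀ P A are a scalar and a 1×2 row vector, respectively), and P is positive semidefinite (det P ≥ 0 and trace P ≥ 0, hence both eigenvalues of the symmetric matrix P are nonnegative). -/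
/-- For `|ρ| < 1` and the 2-dimensional LQ data
`A = [[1,1],[0,ρ]]`, `B = [1;0]`, `Q = [[1,0],[0,0]]`, `R = 1`, the matrix
`P = [[p₁, p₁₂],[p₁₂, p₂]]` built from `p₁ = (1+√5)/2`, `p₁₂ = p₁/(p₁² - ρ)` and
`p₂ = (p₁⁵ - p₁ρ² - p₁⁴)/((1-ρ²)(p₁² - ρ)²)` satisfies the discrete algebraic Riccati
equation and is positive semidefinite (`det P ≥ 0` and `trace P ≥ 0`). -/
theorem stmt_10 (ρ : ℝ) (hρ : |ρ| < 1)
    (p₁ p₁₂ p₂ : ℝ)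
    (hp₁ : p₁ = (1 + Real.sqrt 5) / 2)
    (hp₁₂ : p₁₂ = p₁ / (p₁ ^ 2 - ρ))
    (hp₂ : p₂ = (p₁ ^ 5 - p₁ * ρ ^ 2 - p₁ ^ 4) / ((1 - ρ ^ 2) * (p₁ ^ 2 - ρ) ^ 2))
    (A : Matrix (Fin 2) (Fin 2) ℝ) (hA : A = !![1, 1; 0, ρ])
    (Q : Matrix (Fin 2) (Fin 2) ℝ) (hQ : Q = !![1, 0; 0, 0])
    (B : Matrix (Fin 2) (Fin 1) ℝ) (hB : B = !![1; 0])
    (R : Matrix (Fin 1) (Fin 1) ℝ) (hR : R = 1)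
    (P : Matrix (Fin 2) (Fin 2) ℝ) (hP : P = !![p₁, p₁₂; p₁₂, p₂]) :
    P = A.transpose * P * A + Q -
        (B.transpose * P * A).transpose * (R + B.transpose * P * B)⁻¹ *
          (B.transpose * P * A) ∧
    0 ≤ P.det ∧ 0 ≤ P.trace := by
  have h5 : Real.sqrt 5 ^ 2 = 5 := Real.sq_sqrt (by norm_num)
  have hsq : p₁ ^ 2 = p₁ + 1 := by rw [hp₁]; linarith [h5, sq_nonneg (Real.sqrt 5)]
  have hge : 1 ≤ p₁ := by
    have : 1 ≤ Real.sqrt 5 := Real.one_le_sqrt.mpr (by norm_num)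
    rw [hp₁]; linarith
  clear hp₁ h5
  obtain ⟨h1, h2⟩ := abs_lt.mp hρ
  have hD : 0 < p₁ ^ 2 - ρ := by rw [hsq]; linarith
  have hρ2 : 0 < 1 - ρ ^ 2 := by nlinarith
  have hp : 0 < p₁ := by linarith
  have hD' := hD.ne'
  have hρ' := hρ2.ne'
  have hp' := hp.ne'
  have e12 : p₁₂ * (p₁ ^ 2 - ρ) = p₁ := by rw [hp₁₂]; field_simp
  have e22 : p₂ * (1 - ρ ^ 2) = p₁ + 2 * ρ * p₁₂ - p₁ ^ 2 * p₁₂ ^ 2 := by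
    rw [hp₁₂, hp₂]; field_simp; ring
  have hdet : p₁ * p₂ - p₁₂ * p₁₂
      = (p₁ ^ 4 - p₁ ^ 2) / ((1 - ρ ^ 2) * (p₁ ^ 2 - ρ) ^ 2) := by
    have : p₁ ^ 4 - p₁ ^ 2 = p₁ * (p₁ ^ 5 - p₁ * ρ ^ 2 - p₁ ^ 4) - p₁ ^ 2 * (1 - ρ ^ 2) := by
      linear_combination (-p₁ ^ 4) * hsq
    rw [this, hp₁₂, hp₂]; field_simp
  have hp2 : 0 ≤ p₂ := by
    have : p₁ ^ 5 - p₁ * ρ ^ 2 - p₁ ^ 4 = p₁ * (p₁ ^ 2 - 1 + (1 - ρ ^ 2)) := by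
      linear_combination (p₁ ^ 3) * hsq
    rw [hp₂, this]
    have : 0 ≤ p₁ ^ 2 - 1 := by nlinarith
    positivity
  have hM : (R + B.transpose * P * B)⁻¹ = !![1 / p₁ ^ 2] := by
    apply Matrix.inv_eq_right_inv
    subst hR hB hP
    ext i j
    fin_cases i; fin_cases j
    simp [Matrix.mul_apply, Fin.sum_univ_two]
    rw [add_comm, ← hsq]; field_simp
  have hrow : B.transpose * P * A = !![p₁, p₁ ^ 2 * p₁₂] := by
    subst hB hP hA
    ext i j
    fin_cases i; fin_cases j
    · simp [Matrix.mul_apply, Fin.sum_univ_two]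
    · simp [Matrix.mul_apply, Fin.sum_univ_two]
      linarith
  have hx : p₁₂ * p₁ ^ 2 = p₁₂ * (p₁ + 1) := by rw [hsq]
  refine ⟨?_, ?_, ?_⟩
  · rw [hM, hrow]
    subst hP hA hQ
    ext i j
    fin_cases i <;> fin_cases j <;> simp [Matrix.mul_apply, Fin.sum_univ_two] <;> field_simp <;>
      linarith
  · rw [hP, Matrix.det_fin_two_of, hdet]
    have : 0 ≤ p₁ ^ 4 - p₁ ^ 2 := by nlinarith
    positivity
  · rw [hP, Matrix.trace_fin_two_of]
    linarith
end

section
/- Let ρ ∈ ℝ with |ρ| < 1, set p₁ = (1 − √5)/2, and assume ρ ≠ p₁². Define p₁₂ = p₁/(p₁² − ρ), p₂ = (p₁⁵ − p₁ρ² − p₁⁴)/((1 − ρ²)(p₁² − ρ)²), and P = [[p₁, p₁₂],[p₁₂, p₂]]. Then det P = p₁ p₂ − p₁₂² < 0; in particular, the symmetric matrix P is not positive semidefinite. -/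
/-- For `|ρ| < 1`, `p₁ = (1 - √5)/2` with `ρ ≠ p₁²`, and
`p₁₂ = p₁/(p₁² - ρ)`, `p₂ = (p₁⁵ - p₁ρ² - p₁⁴)/((1-ρ²)(p₁² - ρ)²)`, the matrix
`P = [[p₁, p₁₂],[p₁₂, p₂]]` has `det P = p₁p₂ - p₁₂² < 0`; in particular `P` is not
positive semidefinite. -/
theorem stmt_11 (ρ : ℝ) (hρ : |ρ| < 1)
    (p₁ p₁₂ p₂ : ℝ)
    (hp₁ : p₁ = (1 - Real.sqrt 5) / 2)
    (hne : ρ ≠ p₁ ^ 2)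
    (hp₁₂ : p₁₂ = p₁ / (p₁ ^ 2 - ρ))
    (hp₂ : p₂ = (p₁ ^ 5 - p₁ * ρ ^ 2 - p₁ ^ 4) / ((1 - ρ ^ 2) * (p₁ ^ 2 - ρ) ^ 2))
    (P : Matrix (Fin 2) (Fin 2) ℝ) (hP : P = !![p₁, p₁₂; p₁₂, p₂]) :
    P.det = p₁ * p₂ - p₁₂ ^ 2 ∧ P.det < 0 ∧ ¬ P.PosSemidef := by
  have h5 : Real.sqrt 5 ^ 2 = 5 := Real.sq_sqrt (by norm_num)
  have h1 : 1 < Real.sqrt 5 := by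
    rw [Real.lt_sqrt (by norm_num)]; norm_num
  have hneg : p₁ < 0 := by rw [hp₁]; linarith
  have hq : p₁ ^ 2 = p₁ + 1 := by rw [hp₁]; linarith
  have hd : p₁ ^ 2 - ρ ≠ 0 := fun h => hne (by linarith)
  have hr : 0 < 1 - ρ ^ 2 := by
    have := (sq_lt_one_iff_abs_lt_one ρ).2 hρ
    linarith
  have hdet : P.det = p₁ * p₂ - p₁₂ ^ 2 := by
    rw [hP, Matrix.det_fin_two_of]; ring
  have hD : 0 < (1 - ρ ^ 2) * (p₁ ^ 2 - ρ) ^ 2 := by positivity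
  have key : p₁ * p₂ - p₁₂ ^ 2 = p₁ ^ 3 / ((1 - ρ ^ 2) * (p₁ ^ 2 - ρ) ^ 2) := by
    have e : p₁₂ ^ 2 = (p₁ ^ 2 * (1 - ρ ^ 2)) / ((1 - ρ ^ 2) * (p₁ ^ 2 - ρ) ^ 2) := by
      rw [hp₁₂, div_pow, mul_comm (p₁ ^ 2) (1 - ρ ^ 2), mul_div_mul_left _ _ hr.ne']
    rw [e, hp₂, ← mul_div_assoc, ← sub_div]
    congr 1
    linear_combination (p₁ ^ 4 + p₁ ^ 2) * hq
  have hlt : P.det < 0 := by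
    rw [hdet, key]
    exact div_neg_of_neg_of_pos (Odd.pow_neg (by decide) hneg) hD
  exact ⟨hdet, hlt, fun h => absurd h.det_nonneg (not_le.2 hlt)⟩
end

section
/- Let Σ be a symmetric positive definite real n×n matrix, let V be a real n×n matrix, let w ∈ ℝ^n, and let ε ≥ 0 and c ∈ [0, 1). Assume that ‖Σ^{−1/2} V w‖₂ ≤ ε and ‖Σ^{−1/2} V Σ^{−1/2} − I‖_op ≤ c. Then ‖Σ^{1/2} w‖₂ ≤ ε/(1 − c). -/
/-- The Euclidean (`ℓ₂`) norm of a vector in `ℝ^n`. -/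
noncomputable def euclNorm {n : ℕ} (x : Fin n → ℝ) : ℝ :=
  Real.sqrt (∑ i, x i ^ 2)

/-- The spectral (operator `ℓ₂ → ℓ₂`) norm of a real matrix. -/
noncomputable def opNorm {m n : ℕ} (M : Matrix (Fin m) (Fin n) ℝ) : ℝ :=
  sSup {c : ℝ | ∃ x : Fin n → ℝ, euclNorm x ≤ 1 ∧ c = euclNorm (M.mulVec x)}

theorem euclNorm_eq_aux {n : ℕ} (x : Fin n → ℝ) : euclNorm x = ‖WithLp.toLp 2 x‖ := by
  simp [euclNorm, EuclideanSpace.norm_eq]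

theorem opNorm_bound_aux {n : ℕ} (M : Matrix (Fin n) (Fin n) ℝ) (c : ℝ)
    (h : opNorm M ≤ c) (x : Fin n → ℝ) : euclNorm (M.mulVec x) ≤ c * euclNorm x := by
  have hbdd : BddAbove {c : ℝ | ∃ x : Fin n → ℝ, euclNorm x ≤ 1 ∧ c = euclNorm (M.mulVec x)} := by
    refine ⟨‖Matrix.toEuclideanCLM (𝕜 := ℝ) M‖, ?_⟩
    rintro _ ⟨y, hy, rfl⟩
    rw [euclNorm_eq_aux] at hy ⊢
    have := (Matrix.toEuclideanCLM (𝕜 := ℝ) M).le_opNorm (WithLp.toLp 2 y)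
    rw [Matrix.toEuclideanCLM_toLp] at this
    exact this.trans (mul_le_of_le_one_right (norm_nonneg _) hy)
  by_cases hx : euclNorm x = 0
  · have h0 : x = 0 := by
      rw [euclNorm_eq_aux, norm_eq_zero] at hx
      simpa using hx
    subst h0
    simp [euclNorm]
  · have hpos : 0 < euclNorm x := lt_of_le_of_ne (Real.sqrt_nonneg _) (Ne.symm hx)
    have hs : ∀ (t : ℝ) (z : Fin n → ℝ), euclNorm (t • z) = |t| * euclNorm z := by
      intro t z
      rw [euclNorm_eq_aux, euclNorm_eq_aux, WithLp.toLp_smul, norm_smul, Real.norm_eq_abs]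
    have h1 : euclNorm (M.mulVec ((euclNorm x)⁻¹ • x)) ≤ c := by
      refine le_trans (le_csSup hbdd ⟨_, ?_, rfl⟩) h
      rw [hs, abs_of_pos (inv_pos.2 hpos), inv_mul_cancel₀ hx]
    rw [Matrix.mulVec_smul, hs, abs_of_pos (inv_pos.2 hpos), inv_mul_le_iff₀ hpos] at h1
    linarith

/-- Let `Sg` be symmetric positive definite with symmetric positive
definite square root `S` (so `Sg^{1/2} = S` and `Sg^{-1/2} = S⁻¹`), let `V` be a matrix,
`w ∈ ℝ^n`, `ε ≥ 0` and `c ∈ [0,1)`. If `‖Sg^{-1/2} V w‖₂ ≤ ε` and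
`‖Sg^{-1/2} V Sg^{-1/2} - I‖_op ≤ c`, then `‖Sg^{1/2} w‖₂ ≤ ε / (1 - c)`. -/
theorem stmt_12 {n : ℕ} (Sg S V : Matrix (Fin n) (Fin n) ℝ)
    (hSg : Sg.PosDef) (hS : S.PosDef) (hSsq : S * S = Sg)
    (w : Fin n → ℝ) (ε c : ℝ) (hε : 0 ≤ ε) (hc0 : 0 ≤ c) (hc1 : c < 1)
    (h1 : euclNorm ((S⁻¹ * V).mulVec w) ≤ ε)
    (h2 : opNorm (S⁻¹ * V * S⁻¹ - 1) ≤ c) :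
    euclNorm (S.mulVec w) ≤ ε / (1 - c) := by
  have hdet : IsUnit S.det := hS.det_pos.ne'.isUnit
  have hb := opNorm_bound_aux _ c h2 (S.mulVec w)
  have he : (S⁻¹ * V * S⁻¹ - 1).mulVec (S.mulVec w) = (S⁻¹ * V).mulVec w - S.mulVec w := by
    rw [Matrix.sub_mulVec, Matrix.one_mulVec, Matrix.mulVec_mulVec, Matrix.mul_assoc,
      Matrix.nonsing_inv_mul _ hdet, Matrix.mul_one]
  rw [he] at hb
  rw [le_div_iff₀ (by linarith)]
  rw [euclNorm_eq_aux] at h1 hb ⊢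
  rw [euclNorm_eq_aux, WithLp.toLp_sub] at hb
  have := norm_sub_norm_le (WithLp.toLp 2 (S.mulVec w)) (WithLp.toLp 2 ((S⁻¹ * V).mulVec w))
  rw [norm_sub_rev] at this
  nlinarith
end
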